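/- Let T be a finite tree rooted at r with at least one edge and let p ≥ 2·h(T). There exists an optimal solution 𝓘 of the Min-Immersions problem (a feasible covering minimizing the number of immersions |𝓘|) such that the leaf sets of the immersions of 𝓘 form a partition of the set of leaves of T, i.e. every leaf of every immersion I ∈ 𝓘 is a leaf of T and every leaf of T is a leaf of exactly one immersion of 𝓘. -/

import Mathlib

/-!
Take any covering `𝓘` with the fewest immersions; one exists, since the paths from the root to the
vertices cost at most `2 * h(T) ≤ p` each and together form a feasible covering. Assign to every
leaf `l` of the tree one immersion `f l ∈ 𝓘` that contains it, and replace each `I ∈ 𝓘` by the union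
`rootHull` of the root paths to the leaves assigned to `I`.

* The new subgraph is connected, contains the root and is contained in `I`, since a connected
  subgraph of a tree contains the path between any two of its vertices
  (`toSubgraph_le_of_connected`). Hence its cost is still at most `p`.
* Every vertex lies on the root path to some leaf (`exists_leaf_path_through`), so the new family
  still covers; it has no more members than `𝓘`, so it is optimal.
* A vertex other than the root which lies on a root path without being its end has two neighbours on
  it. So the leaves of the new subgraph are exactly the leaves of the tree assigned to `I`
  (`isImmLeaf_rootHull_iff`), and these sets partition the leaves of the tree.
-/

open SimpleGraph Finset

/-- Cost of a subgraph-immersion: twice the number of its edges. -/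
noncomputable def immCost {V : Type*} {G : SimpleGraph V} (I : G.Subgraph) : ℕ :=
  2 * I.edgeSet.ncard

/-- An immersion is a connected subgraph of `G` containing the root `r`. -/
def IsImmersion {V : Type*} {G : SimpleGraph V} (r : V) (I : G.Subgraph) : Prop :=
  I.Connected ∧ r ∈ I.verts

/-- Height of the rooted tree: maximum distance from the root. -/
noncomputable def treeHeight {V : Type*} [Fintype V] (G : SimpleGraph V) (r : V) : ℕ :=
  Finset.univ.sup (fun v => G.dist r v)

/-- A leaf of the rooted tree: a vertex `v ≠ r` of degree 1. -/
def IsTreeLeaf {V : Type*} (G : SimpleGraph V) (r v : V) : Prop :=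
  v ≠ r ∧ (G.neighborSet v).ncard = 1

/-- A leaf of an immersion `I`: a vertex `v ≠ r` of degree 1 in `I`. -/
def IsImmLeaf {V : Type*} {G : SimpleGraph V} (r : V) (I : G.Subgraph) (v : V) : Prop :=
  v ≠ r ∧ (I.neighborSet v).ncard = 1

/-- A feasible covering: a finite set of immersions, each of cost at most `p`,
whose vertex sets cover all vertices. -/
def IsFeasible {V : Type*} [Fintype V] {G : SimpleGraph V} (r : V) (p : ℕ)
    (𝓘 : Finset G.Subgraph) : Prop :=
  (∀ I ∈ 𝓘, IsImmersion r I ∧ immCost I ≤ p) ∧ (∀ v : V, ∃ I ∈ 𝓘, v ∈ I.verts)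

/-- Total cost of a set of immersions. -/
noncomputable def totalCost {V : Type*} {G : SimpleGraph V} (𝓘 : Finset G.Subgraph) : ℕ :=
  ∑ I ∈ 𝓘, immCost I

/-- Optimality for the Min-Distance problem. -/
def MinDistOptimal {V : Type*} [Fintype V] {G : SimpleGraph V} (r : V) (p : ℕ)
    (𝓘 : Finset G.Subgraph) : Prop :=
  IsFeasible r p 𝓘 ∧ ∀ 𝓙 : Finset G.Subgraph, IsFeasible r p 𝓙 → totalCost 𝓘 ≤ totalCost 𝓙

/-- Makespan (maximum collective time) of an assignment `a` of immersions to `k` robots. -/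
noncomputable def makespan {V : Type*} {G : SimpleGraph V} (k : ℕ)
    (𝓘 : Finset G.Subgraph) (a : G.Subgraph → Fin k) : ℕ :=
  Finset.univ.sup (fun i : Fin k => ∑ I ∈ 𝓘.filter (fun I => a I = i), immCost I)

/-- Optimality for the Min-Time problem with `k` robots. -/
def MinTimeOptimal {V : Type*} [Fintype V] {G : SimpleGraph V} (r : V) (p k : ℕ)
    (𝓘 : Finset G.Subgraph) (a : G.Subgraph → Fin k) : Prop :=
  IsFeasible r p 𝓘 ∧ ∀ (𝓙 : Finset G.Subgraph) (b : G.Subgraph → Fin k),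
    IsFeasible r p 𝓙 → makespan k 𝓘 a ≤ makespan k 𝓙 b

/-- Optimality for the Min-Immersions problem. -/
def MinImmOptimal {V : Type*} [Fintype V] {G : SimpleGraph V} (r : V) (p : ℕ)
    (𝓘 : Finset G.Subgraph) : Prop :=
  IsFeasible r p 𝓘 ∧ ∀ 𝓙 : Finset G.Subgraph, IsFeasible r p 𝓙 → 𝓘.card ≤ 𝓙.card

section

variable {V : Type*} {T : SimpleGraph V} {r : V}

/-- The union of the walks `P l` from the root `r` to the vertices `l ∈ L`. The root is included
separately, so that the hull of the empty set is the single vertex `r`. -/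
def rootHull (P : ∀ v, T.Walk r v) (L : Set V) : T.Subgraph :=
  T.singletonSubgraph r ⊔ ⨆ l ∈ L, (P l).toSubgraph

theorem mem_verts_rootHull {P : ∀ v, T.Walk r v} {L : Set V} {v : V} :
    v ∈ (rootHull P L).verts ↔ v = r ∨ ∃ l ∈ L, v ∈ (P l).support := by
  simp [rootHull]

theorem toSubgraph_le_rootHull (P : ∀ v, T.Walk r v) {L : Set V} {l : V} (hl : l ∈ L) :
    (P l).toSubgraph ≤ rootHull P L :=
  le_sup_of_le_right (le_iSup₂_of_le l hl le_rfl)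

theorem isImmersion_rootHull (P : ∀ v, T.Walk r v) (L : Set V) :
    IsImmersion r (rootHull P L) := by
  classical
  have hr : r ∈ (rootHull P L).verts := mem_verts_rootHull.2 (Or.inl rfl)
  have key : ∀ v ∈ (rootHull P L).verts,
      ∃ q : T.Walk r v, q.toSubgraph ≤ rootHull P L := by
    intro v hv
    rcases mem_verts_rootHull.1 hv with rfl | ⟨l, hl, hvl⟩
    · exact ⟨Walk.nil, le_sup_left⟩
    · refine ⟨(P l).takeUntil v hvl, le_trans ?_ (toSubgraph_le_rootHull P hl)⟩
      conv_rhs => rw [← (P l).take_spec hvl, Walk.toSubgraph_append]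
      exact le_sup_left
  refine ⟨(Subgraph.connected_iff_forall_exists_walk_subgraph _).2 ⟨⟨r, hr⟩, ?_⟩, hr⟩
  intro u v hu hv
  obtain ⟨a, ha⟩ := key u hu
  obtain ⟨b, hb⟩ := key v hv
  refine ⟨a.reverse.append b, ?_⟩
  rw [Walk.toSubgraph_append, Walk.toSubgraph_reverse]
  exact sup_le ha hb

/-- A connected subgraph of a tree contains the path joining any two of its vertices. -/
theorem toSubgraph_le_of_connected (hT : T.IsTree) {I : T.Subgraph} (hI : I.Connected)
    {u v : V} (hu : u ∈ I.verts) (hv : v ∈ I.verts) {q : T.Walk u v} (hq : q.IsPath) :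
    q.toSubgraph ≤ I := by
  classical
  obtain ⟨w, hw⟩ := ((Subgraph.connected_iff_forall_exists_walk_subgraph _).1 hI).2 hu hv
  rw [(hT.existsUnique_path u v).unique hq w.bypass_isPath]
  exact Walk.toSubgraph_bypass_le_toSubgraph.trans hw

theorem rootHull_le (hT : T.IsTree) {P : ∀ v, T.Walk r v} (hP : ∀ v, (P v).IsPath) {L : Set V}
    {I : T.Subgraph} (hI : IsImmersion r I) (hL : ∀ l ∈ L, l ∈ I.verts) :
    rootHull P L ≤ I := by
  refine sup_le ?_ (iSup₂_le fun l hl => ?_)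
  · exact (singletonSubgraph_le_iff r I).2 hI.2
  · exact toSubgraph_le_of_connected hT hI.1 hI.2 (hL l hl) (hP l)

theorem isImmLeaf_rootHull_iff [Finite V] {P : ∀ v, T.Walk r v}
    (hP : ∀ v, (P v).IsPath) {L : Set V} (hL : ∀ l ∈ L, IsTreeLeaf T r l) {v : V} :
    IsImmLeaf r (rootHull P L) v ↔ v ∈ L := by
  constructor
  · rintro ⟨hvr, hcard⟩
    obtain ⟨w, hw⟩ : ((rootHull P L).neighborSet v).Nonempty := by
      apply Set.nonempty_of_ncard_ne_zero
      omega
    obtain rfl | ⟨l, hl, hvl⟩ := mem_verts_rootHull.1 ((rootHull P L).edge_vert hw)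
    · exact absurd rfl hvr
    by_cases hvl' : v = l
    · exact hvl' ▸ hl
    -- `v` is an inner vertex of the path to `l`, hence has two neighbours on that path.
    exfalso
    obtain ⟨i, rfl, hi⟩ := Walk.mem_support_iff_exists_getVert.1 hvl
    have h0 : i ≠ 0 := by
      rintro rfl
      simp at hvr
    have h1 : i < (P l).length := by
      refine lt_of_le_of_ne hi ?_
      rintro rfl
      simp at hvl'
    have h2 := (hP l).ncard_neighborSet_toSubgraph_internal_eq_two h0 h1
    have h3 : (P l).toSubgraph.neighborSet ((P l).getVert i) ⊆
        (rootHull P L).neighborSet ((P l).getVert i) :=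
      fun x hx => (toSubgraph_le_rootHull P hl).2 hx
    have := Set.ncard_le_ncard h3 (Set.toFinite _)
    omega
  · intro hv
    obtain ⟨hvr, hcard⟩ := hL v hv
    refine ⟨hvr, le_antisymm ?_ ?_⟩
    · rw [← hcard]
      exact Set.ncard_le_ncard ((rootHull P L).neighborSet_subset v) (Set.toFinite _)
    · rw [Nat.one_le_iff_ne_zero, ← Nat.pos_iff_ne_zero, Set.ncard_pos (Set.toFinite _)]
      exact ⟨_, (toSubgraph_le_rootHull P hv).2
        ((P v).toSubgraph_adj_penultimate (Walk.not_nil_of_ne hvr.symm)).symm⟩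

/-- The end of a longest root path through `v` is a leaf: it is not the root because the tree has an
edge, and a neighbour off the path would extend the path. -/
theorem exists_leaf_path_through [Finite V] (hT : T.IsTree) (hE : T.edgeSet.Nonempty)
    {P : ∀ v, T.Walk r v} (hP : ∀ v, (P v).IsPath) (v : V) :
    ∃ l, IsTreeLeaf T r l ∧ v ∈ (P l).support := by
  classical
  obtain ⟨u, hu, hmax⟩ := (Set.toFinite {u | v ∈ (P u).support}).exists_maximalFor
    (fun u => (P u).length) _ ⟨v, (P v).end_mem_support⟩
  have hmax' : ∀ w, v ∈ (P w).support → (P w).length ≤ (P u).length := by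
    intro w hw
    rcases le_total (P w).length (P u).length with h | h
    · exact h
    · exact hmax hw h
  have hext : ∀ {u w}, T.Adj u w → w ∉ (P u).support → v ∈ (P u).support →
      v ∈ (P w).support ∧ (P w).length = (P u).length + 1 := by
    intro u w h hw hv
    have : P w = (P u).concat h := (hT.existsUnique_path r w).unique (hP w)
      ((Walk.concat_isPath_iff h).2 ⟨hP u, hw⟩)
    rw [this]
    simp [Walk.support_concat, hv]
  have hnbr : ∀ w, T.Adj u w → w = (P u).penultimate := by
    intro w h
    have hw : w ∈ (P u).support := by
      by_contra hw
      obtain ⟨h1, h2⟩ := hext h hw hu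
      have := hmax' w h1
      omega
    -- The part of the path from `w` to its end `u` is the single edge `wu`.
    have h1 : (P u).dropUntil w hw = h.symm.toWalk :=
      (hT.existsUnique_path w u).unique ((hP u).dropUntil hw) (by simp [h.ne'])
    have h2 := (P u).take_spec hw
    rw [h1] at h2
    rw [← h2]
    exact (Walk.penultimate_concat _ h.symm).symm
  have hur : u ≠ r := by
    rintro rfl
    have hnil : P u = Walk.nil := (hT.existsUnique_path u u).unique (hP u) Walk.IsPath.nil
    have hvu : v = u := by
      have : v ∈ (P u).support := hu
      simpa [hnil] using this
    subst hvu
    have : ∀ w, w = v := by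
      intro w
      have := hmax' w (Walk.start_mem_support _)
      rw [hnil] at this
      exact (Walk.eq_of_length_eq_zero (Nat.le_zero.1 this)).symm
    obtain ⟨e, he⟩ := hE
    induction e with
    | _ a b => exact he.ne ((this a).trans (this b).symm)
  refine ⟨u, ⟨hur, ?_⟩, hu⟩
  rw [Set.ncard_eq_one]
  refine ⟨(P u).penultimate, Set.eq_singleton_iff_unique_mem.2 ⟨?_, hnbr⟩⟩
  exact ((P u).adj_penultimate (Walk.not_nil_of_ne hur.symm)).symm

/-- The root paths to all vertices form a feasible covering. -/
theorem exists_isFeasible [Fintype V] {p : ℕ} (hT : T.IsTree) (hp : 2 * treeHeight T r ≤ p) :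
    ∃ 𝓘 : Finset T.Subgraph, IsFeasible r p 𝓘 := by
  classical
  choose P hP hlen using fun v => hT.connected.exists_path_of_dist r v
  refine ⟨Finset.univ.image fun v => (P v).toSubgraph, ?_, fun v => ⟨_, Finset.mem_image_of_mem _
    (Finset.mem_univ v), (P v).end_mem_verts_toSubgraph⟩⟩
  intro I hI
  obtain ⟨v, -, rfl⟩ := Finset.mem_image.1 hI
  refine ⟨⟨(P v).toSubgraph_connected, (P v).start_mem_verts_toSubgraph⟩, ?_⟩
  have h1 : (P v).toSubgraph.edgeSet.ncard ≤ (P v).length := by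
    rw [Walk.edgeSet_toSubgraph, ← Walk.coe_edges_toFinset, Set.ncard_coe_finset,
      ← Walk.length_edges]
    exact List.toFinset_card_le _
  have h2 : T.dist r v ≤ treeHeight T r :=
    Finset.le_sup (f := fun v => T.dist r v) (Finset.mem_univ v)
  rw [hlen] at h1
  unfold immCost
  omega

theorem exists_minImmOptimal [Fintype V] {p : ℕ} (hT : T.IsTree)
    (hp : 2 * treeHeight T r ≤ p) : ∃ 𝓘 : Finset T.Subgraph, MinImmOptimal r p 𝓘 := by
  obtain ⟨𝓘, h, hmin⟩ := WellFounded.has_min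
    (InvImage.wf (fun 𝓘 : Finset T.Subgraph => 𝓘.card) Nat.lt_wfRel.wf)
    {𝓘 | IsFeasible r p 𝓘} (exists_isFeasible hT hp)
  exact ⟨𝓘, h, fun 𝓙 h𝓙 => not_lt.1 (hmin 𝓙 h𝓙)⟩

end

theorem stmt_8 {V : Type*} [Fintype V] (T : SimpleGraph V) (r : V) (p : ℕ)
    (hT : T.IsTree) (hE : T.edgeSet.Nonempty) (hp : 2 * treeHeight T r ≤ p) :
    ∃ 𝓘 : Finset T.Subgraph, MinImmOptimal r p 𝓘 ∧
      (∀ I ∈ 𝓘, ∀ v : V, IsImmLeaf r I v → IsTreeLeaf T r v) ∧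
      (∀ l : V, IsTreeLeaf T r l → ∃! I : T.Subgraph, I ∈ 𝓘 ∧ IsImmLeaf r I l) := by
  classical
  obtain ⟨𝓘, ⟨hfeas, hcov⟩, hmin⟩ := exists_minImmOptimal hT hp
  choose P hP using fun v => (hT.existsUnique_path r v).exists
  choose f hf𝓘 hfv using hcov
  -- The leaves of the tree assigned to `I`.
  let L : T.Subgraph → Set V := fun I => {l | IsTreeLeaf T r l ∧ f l = I}
  have hL : ∀ I, ∀ l ∈ L I, IsTreeLeaf T r l := fun I l hl => hl.1
  have hmem : ∀ v, rootHull P (L (f v)) ∈ 𝓘.image fun I => rootHull P (L I) :=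
    fun v => Finset.mem_image_of_mem (fun I => rootHull P (L I)) (hf𝓘 v)
  refine ⟨𝓘.image fun I => rootHull P (L I), ⟨⟨?_, ?_⟩, ?_⟩, ?_, ?_⟩
  · intro K hK
    obtain ⟨I, hI, rfl⟩ := Finset.mem_image.1 hK
    refine ⟨isImmersion_rootHull P _, le_trans ?_ (hfeas I hI).2⟩
    have hle : rootHull P (L I) ≤ I := by
      refine rootHull_le hT hP (hfeas I hI).1 ?_
      rintro l ⟨-, rfl⟩
      exact hfv l
    exact Nat.mul_le_mul_left 2 (Set.ncard_le_ncard (Subgraph.edgeSet_mono hle) (Set.toFinite _))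
  · intro v
    obtain ⟨l, hl, hvl⟩ := exists_leaf_path_through hT hE hP v
    exact ⟨_, hmem l, mem_verts_rootHull.2 (Or.inr ⟨l, ⟨hl, rfl⟩, hvl⟩)⟩
  · exact fun 𝓙 h𝓙 => Finset.card_image_le.trans (hmin 𝓙 h𝓙)
  · intro K hK v hv
    obtain ⟨I, -, rfl⟩ := Finset.mem_image.1 hK
    exact ((isImmLeaf_rootHull_iff hP (hL I)).1 hv).1
  · intro l hl
    refine ⟨rootHull P (L (f l)), ⟨hmem l, (isImmLeaf_rootHull_iff hP (hL _)).2 ⟨hl, rfl⟩⟩, ?_⟩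
    rintro K ⟨hK, hKl⟩
    obtain ⟨I, -, rfl⟩ := Finset.mem_image.1 hK
    rw [((isImmLeaf_rootHull_iff hP (hL I)).1 hKl).2]
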